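/- If α ∈ [0,1) is a left-c.e. real number, then h₁(α) is a left-c.e. real number. -/

import Mathlib

open Filter Topology

/-- `a` is a computable nondecreasing sequence of rationals converging to the real `x`. -/
def CompApproxSeq (x : ℝ) (a : ℕ → ℚ) : Prop :=
  Computable a ∧ Monotone a ∧ Filter.Tendsto (fun n => (a n : ℝ)) Filter.atTop (nhds x)

/-- A real number is left-c.e. if it has a computable nondecreasing sequence of
rationals converging to it (equivalently, its left cut is c.e.). -/
def LeftCE (x : ℝ) : Prop := ∃ a : ℕ → ℚ, CompApproxSeq x a

/-- Solovay reducibility: there are a partial computable `f : ℚ →. ℚ` and a positive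
integer `d` such that for every rational `q < β`, `f q` is defined, `f q < α`, and
`α - f q < d * (β - q)`. -/
def SRed (α β : ℝ) : Prop :=
  ∃ f : ℚ →. ℚ, Partrec f ∧ ∃ d : ℕ, 0 < d ∧
    ∀ q : ℚ, (q : ℝ) < β → ∃ y ∈ f q, (y : ℝ) < α ∧ α - (y : ℝ) < (d : ℝ) * (β - (q : ℝ))

/-- Quasi Solovay reducibility: there are a partial computable `f : ℚ →. ℚ` and positive
integers `d, l` such that for every rational `q < β`, `f q` is defined, `f q < α`, and
`(α - f q) ^ l < d * (β - q)`. -/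
def QSRed (α β : ℝ) : Prop :=
  ∃ f : ℚ →. ℚ, Partrec f ∧ ∃ d l : ℕ, 0 < d ∧ 0 < l ∧
    ∀ q : ℚ, (q : ℝ) < β → ∃ y ∈ f q, (y : ℝ) < α ∧
      (α - (y : ℝ)) ^ l < (d : ℝ) * (β - (q : ℝ))

/-- The `n`-th binary digit (after the binary point, counting from `n = 0`) of the
canonical binary expansion of a real in `[0,1)` (the expansion with infinitely many 0s). -/
noncomputable def binDigit (x : ℝ) (n : ℕ) : ℕ := (⌊x * 2 ^ (n + 1)⌋).toNat % 2

/-- `h₁ x` is the real whose binary expansion lists each bit of `x` followed by its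
complement: if `x = Σ aₙ 2^{-(n+1)}` then
`h₁ x = Σ (aₙ 2^{-(2n+1)} + (1 - aₙ) 2^{-(2n+2)})`. -/
noncomputable def h₁ (x : ℝ) : ℝ :=
  ∑' n : ℕ, ((binDigit x n : ℝ) / 2 ^ (2 * n + 1) + (1 - (binDigit x n : ℝ)) / 2 ^ (2 * n + 2))

/-!
A block `a (1 - a)` of two binary digits is worth `a + 1` in base `4`, so `h₁ x` is `1 / 3` plus the
number obtained by reading the binary digits of `x` in base `4`, and `h₁` is nondecreasing. If
`a s` is a computable nondecreasing sequence of rationals tending to `α`, then the values of `h₁` at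
the truncations of `a s` to `s` binary digits are rational, computable and nondecreasing in `s`, and
they tend to `h₁ α` as soon as every digit of `a s` stabilizes at that of `α`. This can fail only
for dyadic `α`, where `h₁` jumps; but there `h₁ α` is rational.
-/

section Computability

open Encodable

theorem computablePred_eq {α β : Type*} [Primcodable α] [Primcodable β] {f g : α → β}
    (hf : Computable f) (hg : Computable g) : ComputablePred fun a => f a = g a := by
  classical
  exact (Primrec.eq.decide.to_comp.comp hf hg).computablePred

theorem computablePred_and {α : Type*} [Primcodable α] {p q : α → Prop}
    (hp : ComputablePred p) (hq : ComputablePred q) : ComputablePred fun a => p a ∧ q a := by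
  classical
  exact ((Primrec.and.to_comp.comp hp.decide hq.decide).of_eq fun _ =>
    (Bool.decide_and _ _).symm).computablePred

theorem computablePred_or {α : Type*} [Primcodable α] {p q : α → Prop}
    (hp : ComputablePred p) (hq : ComputablePred q) : ComputablePred fun a => p a ∨ q a := by
  classical
  exact ((Primrec.or.to_comp.comp hp.decide hq.decide).of_eq fun _ =>
    (Bool.decide_or _ _).symm).computablePred

theorem computable_of_computablePred_graph {α β : Type*} [Primcodable α] [Denumerable β]
    {f : α → β} (hf : ComputablePred fun p : α × β => f p.1 = p.2) : Computable f := by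
  classical
  have hsearch : ComputablePred fun p : α × ℕ => f p.1 = Denumerable.ofNat β p.2 :=
    (hf.decide.comp (Computable.fst.pair ((Computable.ofNat β).comp Computable.snd))).computablePred
  have hex : ∀ a, ∃ n, f a = Denumerable.ofNat β n := fun a => ⟨encode (f a), by simp⟩
  exact ((Computable.ofNat β).comp (Computable.find hsearch hex)).of_eq fun a =>
    (Nat.find_spec (hex a)).symm

theorem computable_count {p : ℕ → Prop} [DecidablePred p] (hp : ComputablePred p) :
    Computable (Nat.count p) := by
  have hstep : Computable₂ fun (_ : ℕ) (r : ℕ × ℕ) => cond (decide (p r.1)) (r.2 + 1) r.2 :=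
    .cond (hp.decide.comp (Computable.fst.comp Computable.snd))
      (Computable.succ.comp (Computable.snd.comp Computable.snd))
      (Computable.snd.comp Computable.snd)
  refine (Computable.nat_rec Computable.id (Computable.const 0) hstep).of_eq fun n => ?_
  induction n with
  | zero => exact (Nat.count_zero p).symm
  | succ n ih =>
    simp only [id_eq] at ih ⊢
    rw [ih, Nat.count_succ]
    by_cases h : p n <;> simp [h]

theorem computable_of_encode_eq_count {α : Type*} [Denumerable α] {code : α → ℕ}
    [DecidablePred (· ∈ Set.range code)] (hrange : ComputablePred (· ∈ Set.range code))
    (hcode : ∀ a, encode a = Nat.count (· ∈ Set.range code) (code a)) : Computable code := by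
  refine computable_of_computablePred_graph (ComputablePred.of_eq (p := fun p : α × ℕ =>
    p.2 ∈ Set.range code ∧ Nat.count (· ∈ Set.range code) p.2 = encode p.1) ?_ ?_)
  · exact computablePred_and (hrange.decide.comp Computable.snd).computablePred
      (computablePred_eq ((computable_count hrange).comp Computable.snd)
        (Computable.encode.comp Computable.fst))
  · rintro ⟨a, n⟩
    constructor
    · rintro ⟨hn, hcount⟩
      exact Nat.count_injective ⟨a, rfl⟩ hn ((hcode a).symm.trans hcount.symm)
    · intro (h : code a = n)
      exact h ▸ ⟨⟨a, rfl⟩, (hcode a).symm⟩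

theorem primrec_pow (b : ℕ) : Primrec (b ^ · : ℕ → ℕ) :=
  (Primrec₂.unpaired'.1 Nat.Primrec.pow).comp (Primrec.const b) Primrec.id

theorem primrecRel_dvd : PrimrecRel ((· ∣ ·) : ℕ → ℕ → Prop) :=
  .of_eq (Primrec.eq.comp₂ (Primrec.nat_mod.comp₂ .right .left) (.const 0)) fun _ _ =>
    Nat.dvd_iff_mod_eq_zero.symm

theorem coprime_iff_forall_lt {m n : ℕ} :
    m.Coprime n ↔ ∀ k < m + n + 1, k ∣ m → k ∣ n → k = 1 := by
  refine ⟨fun h k _ hm hn => Nat.eq_one_of_dvd_coprimes h hm hn, fun h =>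
    h (m.gcd n) ?_ (Nat.gcd_dvd_left m n) (Nat.gcd_dvd_right m n)⟩
  rcases m.eq_zero_or_pos with rfl | hm
  · simp
  · have := Nat.gcd_le_left n hm
    omega

theorem primrecRel_coprime : PrimrecRel Nat.Coprime := by
  have hm : PrimrecPred fun q : ℕ × ℕ × ℕ => q.1 ∣ q.2.1 :=
    primrecRel_dvd.comp Primrec.fst (Primrec.fst.comp Primrec.snd)
  have hn : PrimrecPred fun q : ℕ × ℕ × ℕ => q.1 ∣ q.2.2 :=
    primrecRel_dvd.comp Primrec.fst (Primrec.snd.comp Primrec.snd)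
  have hone : PrimrecPred fun q : ℕ × ℕ × ℕ => q.1 = 1 :=
    Primrec.eq.comp Primrec.fst (Primrec.const 1)
  have hbody : PrimrecRel fun (k : ℕ) (p : ℕ × ℕ) => k ∣ p.1 → k ∣ p.2 → k = 1 :=
    (hm.not.or (hn.not.or hone)).of_eq fun _ => by simp only [imp_iff_not_or]
  have hbound : Primrec fun p : ℕ × ℕ => p.1 + p.2 + 1 := Primrec.succ.comp Primrec.nat_add
  have hforall : PrimrecRel fun (l : List ℕ) (p : ℕ × ℕ) =>
      ∀ k ∈ l, k ∣ p.1 → k ∣ p.2 → k = 1 := hbody.forall_mem_list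
  exact (hforall.comp (Primrec.list_range.comp hbound) Primrec.id).of_eq fun _ => by
    simp only [List.mem_range, id_eq, coprime_iff_forall_lt]

theorem encode_int_natCast (n : ℕ) : encode (n : ℤ) = 2 * n := rfl

theorem encode_int_negSucc (n : ℕ) : encode (Int.negSucc n) = 2 * n + 1 := rfl

theorem primrec_int_natAbs : Primrec Int.natAbs := by
  refine (Primrec.nat_div2.comp (Primrec.succ.comp Primrec.encode)).of_eq fun z => ?_
  rcases z with n | n
  · change ((encode (n : ℤ)).succ).div2 = n
    simp [encode_int_natCast]
  · simp [encode_int_negSucc, Nat.div2_val]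

theorem primrec_int_toNat : Primrec Int.toNat := by
  refine (Primrec.cond (Primrec.nat_bodd.comp Primrec.encode) (Primrec.const 0)
    (Primrec.nat_div2.comp Primrec.encode)).of_eq fun z => ?_
  rcases z with n | n
  · simp [encode_int_natCast, Nat.div2_val]
  · simp [encode_int_negSucc, Nat.div2_val]

/-- The code of a rational used by Mathlib's `Encodable ℚ` instance. `Denumerable ℚ`, with respect
to which `Computable` is meant, numbers the rationals in the increasing order of these codes. -/
def ratCode (q : ℚ) : ℕ := Nat.pair (encode q.num) q.den

theorem encode_rat_eq_count [DecidablePred (· ∈ Set.range ratCode)] (q : ℚ) :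
    Rat.instDenumerable.encode q = Nat.count (· ∈ Set.range ratCode) (ratCode q) := by
  rw [Nat.count]
  change List.countP _ _ = _
  congr!

theorem mem_range_ratCode_iff {n : ℕ} :
    n ∈ Set.range ratCode ↔
      0 < n.unpair.2 ∧ (Denumerable.ofNat ℤ n.unpair.1).natAbs.Coprime n.unpair.2 := by
  constructor
  · rintro ⟨q, rfl⟩
    rw [ratCode, Nat.unpair_pair]
    exact ⟨q.den_pos, (Denumerable.ofNat_encode q.num).symm ▸ q.reduced⟩
  · rintro ⟨hpos, hcop⟩
    refine ⟨⟨Denumerable.ofNat ℤ n.unpair.1, n.unpair.2, hpos.ne', hcop⟩, ?_⟩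
    rw [ratCode, Denumerable.encode_ofNat]
    exact Nat.pair_unpair n

theorem computablePred_mem_range_ratCode : ComputablePred (· ∈ Set.range ratCode) := by
  have hden : Primrec fun n : ℕ => n.unpair.2 := Primrec.snd.comp Primrec.unpair
  have hnum : Primrec fun n : ℕ => (Denumerable.ofNat ℤ n.unpair.1).natAbs :=
    primrec_int_natAbs.comp ((Primrec.ofNat ℤ).comp (Primrec.fst.comp Primrec.unpair))
  exact (((Primrec.nat_lt.comp (Primrec.const 0) hden).and
    (primrecRel_coprime.comp hnum hden)).of_eq fun _ => mem_range_ratCode_iff.symm).computablePred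

theorem computable_ratCode : Computable ratCode := by
  classical
  exact computable_of_encode_eq_count computablePred_mem_range_ratCode encode_rat_eq_count

theorem computable_rat_num : Computable Rat.num :=
  Computable.encode_iff.1 <| (Computable.fst.comp (Computable.unpair.comp computable_ratCode)).of_eq
    fun q => by simp [ratCode]

theorem computable_rat_den : Computable Rat.den :=
  (Computable.snd.comp (Computable.unpair.comp computable_ratCode)).of_eq fun q => by simp [ratCode]

theorem rat_cast_num_toNat {q : ℚ} (hq : 0 ≤ q) : (q.num.toNat : ℚ) = q * q.den := by
  rw [Rat.mul_den_eq_num]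
  exact_mod_cast Int.toNat_of_nonneg (Rat.num_nonneg.2 hq)

theorem natCast_div_natCast_eq_iff {a b : ℕ} {q : ℚ} :
    (a / b : ℚ) = q ↔
      (a * b = 0 ∧ q = 0) ∨ (a * b ≠ 0 ∧ q.num.toNat * b = a * q.den) := by
  by_cases hab : a * b = 0
  · have hdiv : (a / b : ℚ) = 0 := by simpa using hab
    simp [hab, hdiv, eq_comm]
  obtain ⟨ha, hb⟩ : a ≠ 0 ∧ b ≠ 0 := mul_ne_zero_iff.1 hab
  have hb' : (b : ℚ) ≠ 0 := Nat.cast_ne_zero.2 hb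
  simp only [hab, false_and, false_or, ne_eq, not_false_eq_true, true_and]
  rcases le_or_gt 0 q with hq | hq
  · rw [← Nat.cast_inj (R := ℚ), Nat.cast_mul, Nat.cast_mul, rat_cast_num_toNat hq,
      mul_right_comm, mul_left_inj' (Nat.cast_ne_zero.2 q.den_nz), div_eq_iff hb', eq_comm]
  · have hnum : q.num.toNat = 0 := Int.toNat_of_nonpos (Rat.num_nonpos.2 hq.le)
    have hdiv : (a / b : ℚ) ≠ q := (hq.trans_le (by positivity)).ne'
    simp [hnum, hdiv, ha, q.den_nz]

theorem computable₂_natCast_div_natCast : Computable₂ fun a b : ℕ => (a / b : ℚ) := by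
  have ha : Computable fun p : (ℕ × ℕ) × ℚ => p.1.1 := Computable.fst.comp Computable.fst
  have hb : Computable fun p : (ℕ × ℕ) × ℚ => p.1.2 := Computable.snd.comp Computable.fst
  have hnum : Computable fun p : (ℕ × ℕ) × ℚ => p.2.num.toNat :=
    primrec_int_toNat.to_comp.comp (computable_rat_num.comp Computable.snd)
  have hden : Computable fun p : (ℕ × ℕ) × ℚ => p.2.den :=
    computable_rat_den.comp Computable.snd
  have hmul : Computable₂ ((· * ·) : ℕ → ℕ → ℕ) := Primrec.nat_mul.to_comp
  have hzero := computablePred_eq (hmul.comp ha hb) (Computable.const 0)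
  exact computable_of_computablePred_graph <|
    (computablePred_or
      (computablePred_and hzero (computablePred_eq Computable.snd (Computable.const 0)))
      (computablePred_and hzero.not
        (computablePred_eq (hmul.comp hnum hb) (hmul.comp ha hden)))).of_eq
    fun _ => natCast_div_natCast_eq_iff.symm

theorem natFloor_rat_mul_natCast (q : ℚ) (m : ℕ) : ⌊q * m⌋₊ = q.num.toNat * m / q.den := by
  rcases le_or_gt 0 q with hq | hq
  · rw [← Rat.natFloor_natCast_div_natCast, Nat.cast_mul, rat_cast_num_toNat hq, mul_right_comm,
      mul_div_cancel_right₀ _ (Nat.cast_ne_zero.2 q.den_nz)]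
  · rw [Int.toNat_of_nonpos (Rat.num_nonpos.2 hq.le), zero_mul, Nat.zero_div,
      Nat.floor_of_nonpos (mul_nonpos_of_nonpos_of_nonneg hq.le m.cast_nonneg)]

theorem computable₂_natFloor_rat_mul_natCast :
    Computable₂ fun (q : ℚ) (m : ℕ) => ⌊q * m⌋₊ := by
  have hnum : Computable fun p : ℚ × ℕ => p.1.num.toNat :=
    primrec_int_toNat.to_comp.comp (computable_rat_num.comp Computable.fst)
  exact (Primrec.nat_div.to_comp.comp (Primrec.nat_mul.to_comp.comp hnum Computable.snd)
    (computable_rat_den.comp Computable.fst)).of_eq fun p => (natFloor_rat_mul_natCast p.1 p.2).symm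

end Computability

section MoserDeBruijn

/-- The Moser–de Bruijn sequence: the binary digits of `m`, read in base `4`. -/
def moserDeBruijn (m : ℕ) : ℕ := Nat.ofDigits 4 (Nat.digits 2 m)

theorem moserDeBruijn_eq_div_two (m : ℕ) :
    moserDeBruijn m = 4 * moserDeBruijn (m / 2) + m % 2 := by
  rcases m.eq_zero_or_pos with rfl | hm
  · simp [moserDeBruijn]
  · rw [moserDeBruijn, Nat.digits_def' one_lt_two hm, Nat.ofDigits_cons, add_comm]
    rfl

theorem moserDeBruijn_mul_two_pow (m k : ℕ) :
    moserDeBruijn (m * 2 ^ k) = moserDeBruijn m * 4 ^ k := by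
  induction k with
  | zero => simp
  | succ k ih =>
    rw [moserDeBruijn_eq_div_two, pow_succ, ← mul_assoc, Nat.mul_div_cancel _ two_pos,
      Nat.mul_mod_left, ih]
    ring

theorem moserDeBruijn_strictMono : StrictMono moserDeBruijn := by
  refine strictMono_nat_of_lt_succ fun m => ?_
  induction m using Nat.strong_induction_on with
  | _ m ih =>
    rw [moserDeBruijn_eq_div_two m, moserDeBruijn_eq_div_two (m + 1)]
    rcases Nat.even_or_odd' m with ⟨k, rfl | rfl⟩
    · have hdiv : (2 * k + 1) / 2 = 2 * k / 2 := by omega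
      rw [hdiv]
      omega
    · have hdiv : (2 * k + 1) / 2 = k := by omega
      have hdiv' : (2 * k + 1 + 1) / 2 = k + 1 := by omega
      rw [hdiv, hdiv']
      have := ih k (by omega)
      omega

theorem primrec_moserDeBruijn : Primrec moserDeBruijn := by
  have hlen : Primrec fun p : ℕ × List ℕ => p.2.length := Primrec.list_length.comp Primrec.snd
  have hrec : Primrec₂ fun (p : ℕ × List ℕ) (v : ℕ) => 4 * v + p.2.length % 2 :=
    Primrec.nat_add.comp (Primrec.nat_mul.comp (Primrec.const 4) Primrec.snd)
      (Primrec.nat_mod.comp (hlen.comp Primrec.fst) (Primrec.const 2))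
  have hstep : Primrec₂ fun (_ : ℕ) (l : List ℕ) =>
      if l.length = 0 then some 0 else l[l.length / 2]?.map (4 * · + l.length % 2) :=
    Primrec.ite (Primrec.eq.comp hlen (Primrec.const 0)) (Primrec.const (some 0))
      (Primrec.option_map (Primrec.list_getElem?.comp Primrec.snd
        (Primrec.nat_div.comp hlen (Primrec.const 2))) hrec)
  refine (Primrec.nat_strong_rec (fun _ : ℕ => moserDeBruijn) hstep fun _ n => ?_).comp
    (Primrec.const 0) Primrec.id
  rcases n.eq_zero_or_pos with rfl | hn
  · simp [moserDeBruijn]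
  · have hhalf : n / 2 < n := Nat.div_lt_self hn one_lt_two
    simp [hn.ne', hhalf, ← moserDeBruijn_eq_div_two]

end MoserDeBruijn

section Truncation

theorem binDigit_eq_natFloor_mod (x : ℝ) (n : ℕ) : binDigit x n = ⌊x * 2 ^ (n + 1)⌋₊ % 2 := by
  rw [binDigit, Int.floor_toNat]

theorem natFloor_mul_two_pow_succ_div_two (x : ℝ) (n : ℕ) :
    ⌊x * 2 ^ (n + 1)⌋₊ / 2 = ⌊x * 2 ^ n⌋₊ := by
  rw [← Nat.floor_div_ofNat, pow_succ, ← mul_assoc, mul_div_cancel_right₀ _ two_ne_zero]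

theorem moserDeBruijn_natFloor_succ (x : ℝ) (n : ℕ) :
    moserDeBruijn ⌊x * 2 ^ (n + 1)⌋₊ = 4 * moserDeBruijn ⌊x * 2 ^ n⌋₊ + binDigit x n := by
  rw [moserDeBruijn_eq_div_two, natFloor_mul_two_pow_succ_div_two, binDigit_eq_natFloor_mod]

theorem sum_range_binDigit_div {x : ℝ} (hx : x < 1) (n : ℕ) :
    ∑ i ∈ Finset.range n, (binDigit x i : ℝ) / 4 ^ (i + 1) =
      moserDeBruijn ⌊x * 2 ^ n⌋₊ / 4 ^ n := by
  induction n with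
  | zero => simp [Nat.floor_eq_zero.2 hx, moserDeBruijn]
  | succ n ih =>
    rw [Finset.sum_range_succ, ih, moserDeBruijn_natFloor_succ]
    push_cast
    field_simp
    ring

theorem hasSum_one_div_four_pow_succ : HasSum (fun n : ℕ => (1 : ℝ) / 4 ^ (n + 1)) (1 / 3) := by
  have hgeom := (hasSum_geometric_of_lt_one (r := (1 / 4 : ℝ)) (by norm_num) (by norm_num)).mul_left
    (1 / 4)
  have hvalue : (1 / 4 * (1 - 1 / 4)⁻¹ : ℝ) = 1 / 3 := by norm_num
  exact hvalue ▸ hgeom.congr_fun fun n => by rw [← one_div_pow, pow_succ']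

theorem summable_binDigit_div (x : ℝ) :
    Summable fun n : ℕ => (binDigit x n : ℝ) / 4 ^ (n + 1) := by
  refine .of_nonneg_of_le (fun n => by positivity) (fun n => ?_)
    hasSum_one_div_four_pow_succ.summable
  have hdigit : binDigit x n ≤ 1 := Nat.le_of_lt_succ (Nat.mod_lt _ two_pos)
  gcongr
  exact_mod_cast hdigit

theorem h₁_eq_one_third_add_tsum (x : ℝ) :
    h₁ x = 1 / 3 + ∑' n : ℕ, (binDigit x n : ℝ) / 4 ^ (n + 1) := by
  rw [← hasSum_one_div_four_pow_succ.tsum_eq,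
    ← hasSum_one_div_four_pow_succ.summable.tsum_add (summable_binDigit_div x), h₁]
  refine tsum_congr fun n => ?_
  have hpow : (4 : ℝ) ^ (n + 1) = 2 ^ (2 * n + 2) := by
    rw [← mul_add_one, pow_mul]
    norm_num
  rw [hpow, pow_succ _ (2 * n + 1)]
  field_simp
  ring

/-- The value of `h₁` at the truncation of `x` to its first `n` binary digits, as a rational; the
summand `1 / 3` collects the contribution of the constant part of the blocks `a (1 - a)`. -/
noncomputable def h₁Trunc (x : ℝ) (n : ℕ) : ℚ := 1 / 3 + moserDeBruijn ⌊x * 2 ^ n⌋₊ / 4 ^ n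

theorem h₁Trunc_mono_left (n : ℕ) : Monotone (h₁Trunc · n) := fun x y hxy => by
  have hfloor : ⌊x * 2 ^ n⌋₊ ≤ ⌊y * 2 ^ n⌋₊ := by gcongr
  have := moserDeBruijn_strictMono.monotone hfloor
  simp only [h₁Trunc]
  gcongr

theorem h₁Trunc_mono_right (x : ℝ) : Monotone (h₁Trunc x) := by
  refine monotone_nat_of_le_succ fun n => ?_
  rw [h₁Trunc, h₁Trunc, moserDeBruijn_natFloor_succ, pow_succ', add_le_add_iff_left,
    ← mul_div_mul_left _ _ (four_ne_zero : (4 : ℚ) ≠ 0)]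
  gcongr
  push_cast
  exact le_add_of_nonneg_right (Nat.cast_nonneg _)

theorem tendsto_h₁Trunc {x : ℝ} (hx : x < 1) :
    Tendsto (fun n => (h₁Trunc x n : ℝ)) atTop (𝓝 (h₁ x)) := by
  rw [h₁_eq_one_third_add_tsum]
  refine ((summable_binDigit_div x).hasSum.tendsto_sum_nat.const_add (1 / 3)).congr fun n => ?_
  rw [sum_range_binDigit_div hx, h₁Trunc]
  push_cast
  rfl

theorem h₁Trunc_le_h₁ {x : ℝ} (hx : x < 1) (n : ℕ) : (h₁Trunc x n : ℝ) ≤ h₁ x :=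
  Monotone.ge_of_tendsto (Rat.cast_mono.comp (h₁Trunc_mono_right x)) (tendsto_h₁Trunc hx) n

theorem h₁Trunc_natCast_div_two_pow (m : ℕ) {k n : ℕ} (hkn : k ≤ n) :
    h₁Trunc (m / 2 ^ k) n = 1 / 3 + moserDeBruijn m / 4 ^ k := by
  obtain ⟨j, rfl⟩ := Nat.exists_eq_add_of_le hkn
  have hfloor : ⌊(m / 2 ^ k * 2 ^ (k + j) : ℝ)⌋₊ = m * 2 ^ j := by
    rw [pow_add, ← mul_assoc, div_mul_cancel₀ _ (by positivity)]
    exact_mod_cast Nat.floor_natCast (R := ℝ) (m * 2 ^ j)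
  rw [h₁Trunc, hfloor, moserDeBruijn_mul_two_pow, pow_add]
  push_cast
  rw [mul_div_mul_right _ _ (by positivity)]

theorem h₁_natCast_div_two_pow {m k : ℕ} (h : (m / 2 ^ k : ℝ) < 1) :
    h₁ (m / 2 ^ k) = ((1 / 3 + moserDeBruijn m / 4 ^ k : ℚ) : ℝ) :=
  tendsto_nhds_unique (tendsto_h₁Trunc h) <| tendsto_const_nhds.congr' <|
    (eventually_ge_atTop k).mono fun _ hn =>
      congrArg Rat.cast (h₁Trunc_natCast_div_two_pow m hn).symm

theorem eventually_natFloor_eq {x : ℝ} (hx : (⌊x⌋₊ : ℝ) < x) : ∀ᶠ y in 𝓝[≤] x, ⌊y⌋₊ = ⌊x⌋₊ :=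
  mem_of_superset (Ioc_mem_nhdsLE hx) fun _ hy =>
    (Nat.floor_mono hy.2).antisymm (Nat.le_floor hy.1.le)

theorem tendsto_h₁Trunc_diagonal {x : ℝ} {a : ℕ → ℝ} (hx : x < 1)
    (hfloor : ∀ n, (⌊x * 2 ^ n⌋₊ : ℝ) < x * 2 ^ n) (hle : ∀ s, a s ≤ x)
    (ha : Tendsto a atTop (𝓝 x)) :
    Tendsto (fun s => (h₁Trunc (a s) s : ℝ)) atTop (𝓝 (h₁ x)) := by
  refine tendsto_order.2 ⟨fun c hc => ?_, fun c hc => .of_forall fun s => ?_⟩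
  · obtain ⟨n, hn⟩ := ((tendsto_h₁Trunc hx).eventually_const_lt hc).exists
    have hscaled : Tendsto (fun s => a s * 2 ^ n) atTop (𝓝[≤] (x * 2 ^ n)) :=
      tendsto_nhdsWithin_iff.2 ⟨ha.mul_const _, .of_forall fun s =>
        mul_le_mul_of_nonneg_right (hle s) (by positivity)⟩
    filter_upwards [hscaled.eventually (eventually_natFloor_eq (hfloor n)),
      eventually_ge_atTop n] with s hs hns
    calc c < h₁Trunc x n := hn
      _ = h₁Trunc (a s) n := by rw [h₁Trunc, h₁Trunc, hs]
      _ ≤ h₁Trunc (a s) s := Rat.cast_le.2 (h₁Trunc_mono_right _ hns)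
  · calc (h₁Trunc (a s) s : ℝ) ≤ h₁Trunc x s := Rat.cast_le.2 (h₁Trunc_mono_left s (hle s))
      _ ≤ h₁ x := h₁Trunc_le_h₁ hx s
      _ < c := hc

theorem h₁Trunc_ratCast (q : ℚ) (n : ℕ) :
    h₁Trunc q n =
      (4 ^ n + 3 * moserDeBruijn ⌊q * (2 ^ n : ℕ)⌋₊ : ℕ) / (3 * 4 ^ n : ℕ) := by
  have hfloor : ⌊(q * 2 ^ n : ℝ)⌋₊ = ⌊q * (2 ^ n : ℕ)⌋₊ := by
    rw [← Int.floor_toNat, ← Int.floor_toNat, ← Rat.floor_cast (α := ℝ)]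
    push_cast
    rfl
  rw [h₁Trunc, hfloor]
  push_cast
  field_simp

theorem computable₂_h₁Trunc : Computable₂ fun (q : ℚ) (n : ℕ) => h₁Trunc q n := by
  have hadd : Computable₂ ((· + ·) : ℕ → ℕ → ℕ) := Primrec.nat_add.to_comp
  have hmul : Computable₂ ((· * ·) : ℕ → ℕ → ℕ) := Primrec.nat_mul.to_comp
  have hpow (b : ℕ) : Computable fun p : ℚ × ℕ => b ^ p.2 :=
    (primrec_pow b).to_comp.comp Computable.snd
  have hfloor : Computable fun p : ℚ × ℕ => ⌊p.1 * (2 ^ p.2 : ℕ)⌋₊ :=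
    computable₂_natFloor_rat_mul_natCast.comp Computable.fst (hpow 2)
  have hnum : Computable fun p : ℚ × ℕ =>
      4 ^ p.2 + 3 * moserDeBruijn ⌊p.1 * (2 ^ p.2 : ℕ)⌋₊ :=
    hadd.comp (hpow 4) (hmul.comp (Computable.const 3) (primrec_moserDeBruijn.to_comp.comp hfloor))
  have hden : Computable fun p : ℚ × ℕ => 3 * 4 ^ p.2 := hmul.comp (Computable.const 3) (hpow 4)
  have hquot : Computable fun p : ℚ × ℕ =>
      ((4 ^ p.2 + 3 * moserDeBruijn ⌊p.1 * (2 ^ p.2 : ℕ)⌋₊ : ℕ) / (3 * 4 ^ p.2 : ℕ) : ℚ) :=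
    computable₂_natCast_div_natCast.comp hnum hden
  exact hquot.of_eq fun p => (h₁Trunc_ratCast p.1 p.2).symm

end Truncation

theorem leftCE_ratCast (q : ℚ) : LeftCE q :=
  ⟨fun _ => q, Computable.const q, monotone_const, tendsto_const_nhds⟩

theorem leftCE_h₁_of_natFloor_lt {x : ℝ} (hx : x < 1)
    (hfloor : ∀ n, (⌊x * 2 ^ n⌋₊ : ℝ) < x * 2 ^ n) (h : LeftCE x) : LeftCE (h₁ x) := by
  obtain ⟨a, hcomp, hmono, hlim⟩ := h
  have hmono' : Monotone fun s => (a s : ℝ) := Rat.cast_mono.comp hmono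
  refine ⟨fun s => h₁Trunc (a s) s, computable₂_h₁Trunc.comp hcomp Computable.id,
    fun i j hij => ?_, tendsto_h₁Trunc_diagonal hx hfloor (hmono'.ge_of_tendsto hlim) hlim⟩
  exact (h₁Trunc_mono_right _ hij).trans (h₁Trunc_mono_left j (hmono' hij))

/-- If `α ∈ [0,1)` is a left-c.e. real then `h₁ α` is a left-c.e. real. -/
theorem stmt6 (α : ℝ) (h0 : 0 ≤ α) (h1 : α < 1) (h : LeftCE α) : LeftCE (h₁ α) := by
  by_cases hdyadic : ∃ m k : ℕ, α = m / 2 ^ k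
  · obtain ⟨m, k, rfl⟩ := hdyadic
    rw [h₁_natCast_div_two_pow h1]
    exact leftCE_ratCast _
  · refine leftCE_h₁_of_natFloor_lt h1 (fun n => ?_) h
    refine (Nat.floor_le (by positivity)).lt_of_ne fun hfloor => hdyadic ?_
    exact ⟨_, n, (eq_div_iff (by positivity)).2 hfloor.symm⟩
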